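/- arXiv:2211.09941 — 3 statements merged into one kernel-verified Lean document; each statement's English description precedes it below -/
import Mathlib

section
/- Every vector of norm −6 in L is primitive: if ε ∈ L satisfies h(ε,ε) = −6 and ε = λ·ε' for some λ ∈ E and ε' ∈ L, then λ is a unit of E. -/
set_option synthInstance.maxHeartbeats 1000000
set_option maxHeartbeats 1000000

/-- ω = exp(2πi/3), a primitive cube root of unity. -/
noncomputable def omegaC : ℂ := Complex.exp (2 * Real.pi * Complex.I / 3)

/-- The ring of Eisenstein integers E = ℤ[ω], realized as a subalgebra of ℂ. -/
noncomputable def Eis : Subalgebra ℤ ℂ := Algebra.adjoin ℤ {omegaC}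

/-- τ := 1 + ω, a primitive sixth root of unity. -/
noncomputable def tauC : ℂ := 1 + omegaC

/-- θ := 2τ − 1 = ω − ω², so θ² = −3. -/
noncomputable def thetaC : ℂ := 2 * tauC - 1

/-- The Gram matrix of the hermitian lattice L = E^10: diagonal entries −3,
entries θ just above the diagonal, −θ just below it, and 0 elsewhere. -/
noncomputable def gram : Matrix (Fin 10) (Fin 10) ℂ := fun i j =>
  if i = j then -3
  else if (j : ℕ) = (i : ℕ) + 1 then thetaC
  else if (i : ℕ) = (j : ℕ) + 1 then -thetaC
  else 0

/-- The hermitian form h on L = E^10 (ℂ-linear in the first variable, conjugate-linear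
in the second) with Gram matrix `gram` on the standard basis. -/
noncomputable def hermL (x y : Fin 10 → Eis) : ℂ :=
  ∑ i, ∑ j, (x i : ℂ) * gram i j * (starRingEnd ℂ) ((y j : ℂ))

/-- The standard basis a_1, …, a_10 of L = E^10. -/
noncomputable def stdb (i : Fin 10) : Fin 10 → Eis := Pi.single i 1

lemma omegaC_eq : omegaC = -1/2 + (Real.sqrt 3 / 2 : ℝ) * Complex.I := by
  have h : (2 * Real.pi * Complex.I / 3 : ℂ) = ((Real.pi - Real.pi / 3 : ℝ) : ℂ) * Complex.I := by
    push_cast; ring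
  rw [omegaC, h, Complex.exp_mul_I, ← Complex.ofReal_cos, ← Complex.ofReal_sin,
    Real.cos_pi_sub, Real.sin_pi_sub, Real.cos_pi_div_three, Real.sin_pi_div_three]
  push_cast; ring

lemma omegaC_sq : omegaC ^ 2 = -1 - omegaC := by
  have h3 : ((Real.sqrt 3 : ℝ) : ℂ) ^ 2 = 3 := by
    rw [← Complex.ofReal_pow, Real.sq_sqrt (by norm_num)]; norm_num
  rw [omegaC_eq]
  push_cast
  linear_combination (1/4) * Complex.I ^ 2 * h3 + (3/4) * Complex.I_sq

lemma omegaC_conj : (starRingEnd ℂ) omegaC = -1 - omegaC := by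
  rw [omegaC_eq]
  simp only [map_add, map_mul, map_div₀, map_neg, map_one, map_ofNat, Complex.conj_ofReal,
    Complex.conj_I]
  ring

lemma Eis_repr (x : Eis) : ∃ a b : ℤ, (x : ℂ) = a + b * omegaC := by
  obtain ⟨x, hx⟩ := x
  unfold Eis at hx
  change ∃ a b : ℤ, x = a + b * omegaC
  induction hx using Algebra.adjoin_induction with
  | mem y hy =>
    rw [Set.mem_singleton_iff] at hy
    exact ⟨0, 1, by rw [hy]; simp⟩
  | algebraMap r => exact ⟨r, 0, by simp⟩
  | add y z _ _ hy hz =>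
    obtain ⟨a, b, rfl⟩ := hy
    obtain ⟨c, d, rfl⟩ := hz
    exact ⟨a + c, b + d, by push_cast; ring⟩
  | mul y z _ _ hy hz =>
    obtain ⟨a, b, rfl⟩ := hy
    obtain ⟨c, d, rfl⟩ := hz
    refine ⟨a * c - b * d, a * d + b * c - b * d, ?_⟩
    push_cast
    linear_combination (b * d : ℂ) * omegaC_sq

lemma norm_repr (x : Eis) :
    ∃ a b : ℤ, (x : ℂ) = a + b * omegaC ∧
      (x : ℂ) * (starRingEnd ℂ) (x : ℂ) = ((a ^ 2 - a * b + b ^ 2 : ℤ) : ℂ) := by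
  obtain ⟨a, b, h⟩ := Eis_repr x
  refine ⟨a, b, h, ?_⟩
  rw [h]
  simp only [map_add, map_mul, omegaC_conj, map_intCast]
  push_cast
  linear_combination (-(b : ℂ) ^ 2) * omegaC_sq

lemma cross_repr (x y : Eis) :
    ∃ k : ℤ, thetaC * ((x : ℂ) * (starRingEnd ℂ) (y : ℂ) - (y : ℂ) * (starRingEnd ℂ) (x : ℂ))
      = -3 * (k : ℂ) := by
  obtain ⟨a, b, h⟩ := Eis_repr x
  obtain ⟨c, d, h'⟩ := Eis_repr y
  refine ⟨b * c - a * d, ?_⟩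
  rw [h, h', thetaC, tauC]
  simp only [map_add, map_mul, omegaC_conj, map_intCast]
  push_cast
  linear_combination (4 * (b * c - a * d) : ℂ) * omegaC_sq

lemma shift_sum (u v : Fin 10 → ℂ) :
    ∑ i : Fin 10, ∑ j : Fin 10, (if (j : ℕ) = (i : ℕ) + 1 then u i * v j else 0) =
      ∑ i : Fin 9, u i.castSucc * v i.succ := by
  rw [Fin.sum_univ_castSucc]
  have h0 : ∑ j : Fin 10, (if (j : ℕ) = ((Fin.last 9 : Fin 10) : ℕ) + 1
      then u (Fin.last 9) * v j else 0) = 0 := by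
    refine Finset.sum_eq_zero fun j _ => if_neg ?_
    have := j.isLt
    simp only [Fin.val_last]
    omega
  rw [h0, add_zero]
  refine Finset.sum_congr rfl fun i _ => ?_
  rw [Finset.sum_eq_single i.succ]
  · simp
  · intro j _ hj
    refine if_neg fun h => hj (Fin.ext ?_)
    simpa using h
  · simp

lemma hermL_expand (x : Fin 10 → Eis) :
    hermL x x = -3 * ∑ i, (x i : ℂ) * (starRingEnd ℂ) (x i : ℂ) +
      ∑ i : Fin 9, thetaC * ((x i.castSucc : ℂ) * (starRingEnd ℂ) (x i.succ : ℂ)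
        - (x i.succ : ℂ) * (starRingEnd ℂ) (x i.castSucc : ℂ)) := by
  have key : ∀ u v : Fin 10 → ℂ, ∑ i, ∑ j, u i * gram i j * v j =
      -3 * ∑ i, u i * v i + ∑ i : Fin 9, thetaC * (u i.castSucc * v i.succ
        - u i.succ * v i.castSucc) := by
    intro u v
    have hg : ∀ i j : Fin 10, u i * gram i j * v j =
        -3 * (if i = j then u i * v j else 0)
        + thetaC * (if (j : ℕ) = (i : ℕ) + 1 then u i * v j else 0)
        - thetaC * (if (i : ℕ) = (j : ℕ) + 1 then v j * u i else 0) := by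
      intro i j
      unfold gram
      by_cases h1 : i = j
      · subst h1
        simp
        ring
      · by_cases h2 : (j : ℕ) = (i : ℕ) + 1
        · have h3 : ¬ ((i : ℕ) = (j : ℕ) + 1) := by omega
          simp only [h1, h2, h3, if_true, if_false]
          rw [if_neg (by omega)]
          ring
        · by_cases h3 : (i : ℕ) = (j : ℕ) + 1
          · simp only [if_neg h1, if_neg h2, if_pos h3]
            ring
          · simp only [if_neg h1, if_neg h2, if_neg h3]
            ring
    simp only [hg, Finset.sum_add_distrib, Finset.sum_sub_distrib, ← Finset.mul_sum]
    rw [shift_sum u v, Finset.sum_comm (f := fun i j : Fin 10 =>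
      if (i : ℕ) = (j : ℕ) + 1 then v j * u i else 0), shift_sum v u]
    simp only [Finset.sum_ite_eq, Finset.mem_univ, if_true, Finset.sum_sub_distrib]
    rw [add_sub_assoc, ← mul_sub]
    simp only [mul_comm]
  exact key (fun i => (x i : ℂ)) (fun i => (starRingEnd ℂ) (x i : ℂ))

lemma hermL_int (x : Fin 10 → Eis) : ∃ k : ℤ, hermL x x = -3 * (k : ℂ) := by
  have h1 : ∀ i, ∃ n : ℤ, (x i : ℂ) * (starRingEnd ℂ) (x i : ℂ) = n := fun i => by
    obtain ⟨a, b, _, h⟩ := norm_repr (x i)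
    exact ⟨_, h⟩
  choose n hn using h1
  choose k hk using fun i : Fin 9 => cross_repr (x i.castSucc) (x i.succ)
  refine ⟨∑ i, n i + ∑ i, k i, ?_⟩
  rw [hermL_expand]
  simp only [hn, hk]
  rw [← Finset.mul_sum]
  push_cast
  ring

lemma hermL_smul (l : Eis) (x : Fin 10 → Eis) :
    hermL (l • x) (l • x) = ((l : ℂ) * (starRingEnd ℂ) (l : ℂ)) * hermL x x := by
  unfold hermL
  simp only [Finset.mul_sum]
  refine Finset.sum_congr rfl fun i _ => Finset.sum_congr rfl fun j _ => ?_
  simp only [Pi.smul_apply, smul_eq_mul, MulMemClass.coe_mul, map_mul]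
  ring

lemma conj_mem (x : Eis) : (starRingEnd ℂ) (x : ℂ) ∈ Eis := by
  obtain ⟨a, b, h⟩ := Eis_repr x
  have ho : omegaC ∈ Eis := Algebra.subset_adjoin rfl
  rw [h]
  simp only [map_add, map_mul, omegaC_conj, map_intCast]
  exact add_mem (intCast_mem _ _) (mul_mem (intCast_mem _ _) (sub_mem (neg_mem (one_mem _)) ho))

/-- every vector of norm −6 in L is primitive: if h(ε,ε) = −6 and
ε = λ·ε' with λ ∈ E and ε' ∈ L, then λ is a unit of E. -/
theorem stmt7 (ε ε' : Fin 10 → Eis) (l : Eis)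
    (hnorm : hermL ε ε = -6) (hdiv : ε = l • ε') :
    IsUnit l := by
  obtain ⟨k, hk⟩ := hermL_int ε'
  obtain ⟨a, b, _, hN⟩ := norm_repr l
  rw [hdiv, hermL_smul, hk, hN] at hnorm
  have h2 : (a ^ 2 - a * b + b ^ 2) * k = 2 := by
    have : (((a ^ 2 - a * b + b ^ 2) * k : ℤ) : ℂ) = ((2 : ℤ) : ℂ) := by
      push_cast at hnorm ⊢
      linear_combination (-1/3) * hnorm
    exact_mod_cast this
  have hone : a ^ 2 - a * b + b ^ 2 = 1 := by
    have hnn : 0 ≤ a ^ 2 - a * b + b ^ 2 := by nlinarith [sq_nonneg (a - b), sq_nonneg a, sq_nonneg b]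
    have hdvd : a ^ 2 - a * b + b ^ 2 ∣ 2 := ⟨k, h2.symm⟩
    have hle := Int.le_of_dvd (by norm_num) hdvd
    have hne : a ^ 2 - a * b + b ^ 2 ≠ 0 := by
      intro h; rw [h] at h2; simp at h2
    have hne2 : a ^ 2 - a * b + b ^ 2 ≠ 2 := by
      intro h
      have ha : a ≤ 1 := by nlinarith [sq_nonneg (a - 2 * b)]
      have ha' : -1 ≤ a := by nlinarith [sq_nonneg (a - 2 * b)]
      have hb : b ≤ 1 := by nlinarith [sq_nonneg (b - 2 * a)]
      have hb' : -1 ≤ b := by nlinarith [sq_nonneg (b - 2 * a)]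
      interval_cases a <;> interval_cases b <;> simp at h
    omega
  rw [hone] at hN
  refine IsUnit.of_mul_eq_one (⟨_, conj_mem l⟩ : Eis) ?_
  apply Subtype.ext
  simpa using hN
end

section
/- The Gram matrix (h(a_i, a_j))_{1 ≤ i,j ≤ 10} has determinant −243 = −3^5; in particular the hermitian form h on L is nondegenerate. -/
set_option synthInstance.maxHeartbeats 1000000
set_option maxHeartbeats 1000000

lemma thetaC_sq : thetaC * thetaC = -3 := by
  have hp : IsPrimitiveRoot omegaC 3 := by
    have := Complex.isPrimitiveRoot_exp 3 (by norm_num)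
    simpa [omegaC] using this
  have h := hp.geom_sum_eq_zero (by norm_num)
  simp [Finset.sum_range_succ] at h
  unfold thetaC tauC
  linear_combination 4 * h

/-- The tridiagonal matrix of size n with the pattern of `gram`. -/
noncomputable def tri (n : ℕ) : Matrix (Fin n) (Fin n) ℂ := fun i j =>
  if (i : ℕ) = j then -3
  else if (j : ℕ) = (i : ℕ) + 1 then thetaC
  else if (i : ℕ) = (j : ℕ) + 1 then -thetaC
  else 0

lemma tri_succ_succ (n : ℕ) (i j : Fin n) : tri (n+1) i.succ j.succ = tri n i j := by
  simp [tri]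

lemma tri_rec (n : ℕ) : (tri (n+2)).det = -3 * (tri (n+1)).det - 3 * (tri n).det := by
  have h1 : (tri (n+2)).submatrix Fin.succ (Fin.succAbove 0) = tri (n+1) := by
    ext i j
    simp [tri_succ_succ]
  have h2 : ((tri (n+2)).submatrix Fin.succ (Fin.succAbove (Fin.succ 0))).det
      = -thetaC * (tri n).det := by
    rw [Matrix.det_succ_column_zero, Fin.sum_univ_succ, Finset.sum_eq_zero]
    · have h3 : (((tri (n+2)).submatrix Fin.succ (Fin.succAbove (Fin.succ 0))).submatrix
          (Fin.succAbove 0) Fin.succ) = tri n := by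
        ext i j
        simp only [Matrix.submatrix_apply, Fin.succAbove_zero, Fin.succ_succAbove_succ,
          tri_succ_succ]
      rw [h3]
      simp [tri]
    · intro i _
      simp [tri]
  rw [Matrix.det_succ_row_zero, Fin.sum_univ_succ, Fin.sum_univ_succ, Finset.sum_eq_zero, h1, h2]
  · simp [tri]
    linear_combination (tri n).det * thetaC_sq
  · intro i _
    simp [tri]

lemma gram_det : gram.det = -243 := by
  have h : gram = tri 10 := by
    ext i j
    simp [gram, tri, Fin.ext_iff]
  have h0 : (tri 0).det = 1 := by simp
  have h1 : (tri 1).det = -3 := by simp [tri]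
  rw [h]
  have e0 := tri_rec 0
  have e1 := tri_rec 1
  have e2 := tri_rec 2
  have e3 := tri_rec 3
  have e4 := tri_rec 4
  have e5 := tri_rec 5
  have e6 := tri_rec 6
  have e7 := tri_rec 7
  have e8 := tri_rec 8
  norm_num only [h0, h1] at e0
  norm_num only [e0, h1] at e1
  norm_num only [e0, e1] at e2
  norm_num only [e1, e2] at e3
  norm_num only [e2, e3] at e4
  norm_num only [e3, e4] at e5
  norm_num only [e4, e5] at e6
  norm_num only [e5, e6] at e7
  norm_num only [e6, e7] at e8
  exact e8

/-- the Gram matrix (h(a_i,a_j)) has determinant −243 = −3⁵; in particular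
the hermitian form h on L is nondegenerate. -/
theorem stmt9 :
    gram.det = -243 ∧
    (∀ x : Fin 10 → Eis, (∀ y : Fin 10 → Eis, hermL x y = 0) → x = 0) := by
  refine ⟨gram_det, fun x hx => ?_⟩
  have hv : Matrix.vecMul (fun i => (x i : ℂ)) gram = 0 := by
    ext j
    have h := hx (stdb j)
    unfold hermL at h
    rw [Finset.sum_congr rfl (g := fun i => (x i : ℂ) * gram i j)] at h
    · simpa [Matrix.vecMul, dotProduct] using h
    · intro i _
      rw [Finset.sum_eq_single j]
      · simp [stdb]
      · intro k _ hk
        simp [stdb, Pi.single_eq_of_ne hk]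
      · simp
  have h0 := Matrix.eq_zero_of_vecMul_eq_zero (by rw [gram_det]; norm_num) hv
  ext i
  simpa using congrFun h0 i
end

section
/- Let W be the set of 12-tuples (t_1, …, t_12) of transpositions in S_3 such that the product t_12 · t_11 ⋯ t_1 equals the identity and the entries t_1, …, t_12 generate all of S_3. Then any two elements of W are connected by a finite sequence of Hurwitz moves (replacing an adjacent pair (t_i, t_{i+1}) by (t_{i+1}, t_{i+1} t_i t_{i+1}^{-1}), or the inverse of such a move) together with simultaneous conjugations of all entries by a single element of S_3. Equivalently, every element of W is equivalent under such moves to the alternating tuple ((12),(23),(12),(23),…,(12),(23)). -/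
/-- The set W of 12-tuples (t₁,…,t₁₂) of transpositions in S₃ whose product
t₁₂·t₁₁⋯t₁ is the identity and whose entries generate all of S₃. -/
def Wset : Set (Fin 12 → Equiv.Perm (Fin 3)) :=
  {t | (∀ i, (t i).IsSwap) ∧ (List.ofFn t).reverse.prod = 1 ∧
       Subgroup.closure (Set.range t) = ⊤}

/-- One elementary move on 12-tuples: either a Hurwitz move replacing an adjacent pair
(t_i, t_{i+1}) by (t_{i+1}, t_{i+1}·t_i·t_{i+1}⁻¹) and leaving all other entries fixed,
or the simultaneous conjugation of all entries by a single element g ∈ S₃. -/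
def HurwitzStep (t t' : Fin 12 → Equiv.Perm (Fin 3)) : Prop :=
  (∃ i : Fin 11,
      t' i.castSucc = t i.succ ∧
      t' i.succ = t i.succ * t i.castSucc * (t i.succ)⁻¹ ∧
      ∀ j, j ≠ i.castSucc → j ≠ i.succ → t' j = t j) ∨
  (∃ g : Equiv.Perm (Fin 3), ∀ j, t' j = g * t j * g⁻¹)

/-- The alternating tuple ((12),(23),(12),(23),…,(12),(23)). -/
def altTuple : Fin 12 → Equiv.Perm (Fin 3) :=
  fun j => if (j : ℕ) % 2 = 0 then Equiv.swap 0 1 else Equiv.swap 1 2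

/-- The transpositions of S₃, coded by residues mod 3. -/
def tau (a : Fin 3) : Equiv.Perm (Fin 3) :=
  if a = 0 then Equiv.swap 0 1 else if a = 1 then Equiv.swap 1 2 else Equiv.swap 0 2

lemma tau_conj : ∀ a b : Fin 3, tau (2 * b - a) = tau b * tau a * (tau b)⁻¹ := by decide

lemma exists_tau : ∀ s : Equiv.Perm (Fin 3), s.IsSwap → ∃ a, tau a = s := by
  rintro s ⟨x, y, hxy, rfl⟩
  revert x y
  decide

/-- A Hurwitz move on coded lists. -/
def LStep (l l' : List (Fin 3)) : Prop :=
  ∃ u v a b, l = u ++ a :: b :: v ∧ l' = u ++ b :: (2 * b - a) :: v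

/-- Hurwitz equivalence of coded lists. -/
def LEqv : List (Fin 3) → List (Fin 3) → Prop := Relation.EqvGen LStep

lemma LEqv.rfl' (l : List (Fin 3)) : LEqv l l := Relation.EqvGen.refl _

lemma LEqv.trans' {l m n : List (Fin 3)} (h : LEqv l m) (k : LEqv m n) : LEqv l n :=
  Relation.EqvGen.trans _ _ _ h k

lemma LEqv.symm' {l m : List (Fin 3)} (h : LEqv l m) : LEqv m l :=
  Relation.EqvGen.symm _ _ h

lemma LEqv.ctx {l l' : List (Fin 3)} (h : LEqv l l') (u v : List (Fin 3)) :
    LEqv (u ++ l ++ v) (u ++ l' ++ v) := by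
  induction h with
  | rel x y h =>
    obtain ⟨p, q, a, b, rfl, rfl⟩ := h
    exact Relation.EqvGen.rel _ _ ⟨u ++ p, q ++ v, a, b, by simp, by simp⟩
  | refl x => exact LEqv.rfl' _
  | symm x y _ ih => exact ih.symm'
  | trans x y z _ _ ih1 ih2 => exact ih1.trans' ih2

/-- Apply the Hurwitz move at position `i`. -/
def mv : ℕ → List (Fin 3) → List (Fin 3)
  | 0, a :: b :: v => b :: (2 * b - a) :: v
  | i + 1, a :: v => a :: mv i v
  | _, l => l

lemma mv_eqv (i : ℕ) (l : List (Fin 3)) : LEqv l (mv i l) := by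
  induction i generalizing l with
  | zero =>
    match l with
    | [] => exact LEqv.rfl' _
    | [a] => exact LEqv.rfl' _
    | a :: b :: v => exact Relation.EqvGen.rel _ _ ⟨[], v, a, b, rfl, rfl⟩
  | succ i ih =>
    match l with
    | [] => exact LEqv.rfl' _
    | a :: v => simpa [mv] using (ih v).ctx [a] []

/-- Bounded search for a sequence of moves (at positions `0,1,2`) from `l` to one of `T`. -/
def search (T : List (List (Fin 3))) : ℕ → List (Fin 3) → Bool
  | 0, l => T.contains l
  | k + 1, l => T.contains l || search T k (mv 0 l) || search T k (mv 1 l) || search T k (mv 2 l)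

lemma search_sound (T : List (List (Fin 3))) (k : ℕ) (l : List (Fin 3))
    (h : search T k l = true) : ∃ m ∈ T, LEqv l m := by
  induction k generalizing l with
  | zero => exact ⟨l, by simpa [search] using h, LEqv.rfl' _⟩
  | succ k ih =>
    simp only [search, Bool.or_eq_true] at h
    rcases h with ((h | h) | h) | h
    · exact ⟨l, by simpa using h, LEqv.rfl' _⟩
    all_goals
      obtain ⟨m, hm, e⟩ := ih _ h
      exact ⟨m, hm, (mv_eqv _ _).trans' e⟩

/-- The heads of normal forms. -/
def heads : List (List (Fin 3)) := [[0, 1], [0, 2], [1, 1]]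

lemma base3 (a b c : Fin 3) (h : ¬ (a = b ∧ b = c)) :
    ∃ p ∈ heads, LEqv [a, b, c] (p ++ [0]) := by
  have key : ∀ a b c : Fin 3, ¬ (a = b ∧ b = c) →
      search (heads.map (· ++ [0])) 5 [a, b, c] = true := by decide +kernel
  obtain ⟨m, hm, e⟩ := search_sound _ _ _ (key a b c h)
  obtain ⟨p, hp, rfl⟩ := List.mem_map.1 hm
  exact ⟨p, hp, e⟩

lemma window (p : List (Fin 3)) (hp : p ∈ heads) (x : Fin 3) :
    ∃ q ∈ heads, LEqv (p ++ [x, 0]) (q ++ [0, 0]) := by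
  have key : ∀ p ∈ heads, ∀ x : Fin 3,
      search (heads.map (· ++ [0, 0])) 7 (p ++ [x, 0]) = true := by decide +kernel
  obtain ⟨m, hm, e⟩ := search_sound _ _ _ (key p hp x)
  obtain ⟨p, hp, rfl⟩ := List.mem_map.1 hm
  exact ⟨p, hp, e⟩

/-- Moving an entry to the left past a constant block. -/
lemma slide (a : Fin 3) (n : ℕ) (x : Fin 3) : 
    ∃ y, (y = a → x = a) ∧ LEqv (List.replicate n a ++ [x]) (y :: List.replicate n a) := by
  induction n generalizing x with
  | zero => exact ⟨x, id, LEqv.rfl' _⟩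
  | succ n ih =>
    obtain ⟨y, hy, e⟩ := ih x
    refine ⟨2 * a - y, fun h => hy (by clear hy e ih; revert h; revert a y; decide), ?_⟩
    have e1 := e.ctx [a] []
    have e2 : LEqv ((2 * a - y) :: a :: List.replicate n a) (a :: y :: List.replicate n a) :=
      Relation.EqvGen.rel _ _ ⟨[], List.replicate n a, 2 * a - y, a, rfl, by
        have : 2 * a - (2 * a - y) = y := by simp
        simp [this]⟩
    simp only [List.replicate_succ, List.cons_append]
    exact LEqv.trans' (by simpa using e1) e2.symm'

lemma normal (n : ℕ) : ∀ l : List (Fin 3), l.length = n + 3 →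
    (¬ ∃ a, l = List.replicate (n + 3) a) →
    ∃ p ∈ heads, LEqv l (p ++ List.replicate (n + 1) 0) := by
  induction n with
  | zero =>
    intro l hl hc
    match l, hl with
    | [a, b, c], _ =>
      exact base3 a b c (fun ⟨h1, h2⟩ => hc ⟨a, by subst h1; subst h2; rfl⟩)
  | succ n ih =>
    -- the case where the initial segment is not constant
    have main : ∀ (l : List (Fin 3)) (x : Fin 3), l.length = n + 3 →
        (¬ ∃ a, l = List.replicate (n + 3) a) →
        ∃ p ∈ heads, LEqv (l ++ [x]) (p ++ List.replicate (n + 1 + 1) 0) := by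
      intro l x hl hc
      obtain ⟨p, hp, e⟩ := ih l hl hc
      obtain ⟨y, -, e2⟩ := slide 0 (n + 1) x
      obtain ⟨q, hq, e3⟩ := window p hp y
      refine ⟨q, hq, ?_⟩
      have f1 := e.ctx [] [x]
      have f2 := e2.ctx p []
      have f3 := e3.ctx [] (List.replicate n 0)
      simp only [List.nil_append, List.append_nil, List.append_assoc, List.replicate_succ,
        List.cons_append] at f1 f2 f3 ⊢
      exact f1.trans' (f2.trans' f3)
    intro l hl hc
    rcases List.eq_nil_or_concat l with rfl | ⟨front, x, rfl⟩
    · simp at hl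
    have hlen : front.length = n + 3 := by simpa using hl
    by_cases h : ∃ a, front = List.replicate (n + 3) a
    · obtain ⟨a, rfl⟩ := h
      obtain ⟨y, hy, e⟩ := slide a (n + 3) x
      have hya : y ≠ a := by
        intro hya
        apply hc
        refine ⟨a, ?_⟩
        rw [hy hya]
        simp [← List.replicate_succ']
      obtain ⟨p, hp, e2⟩ := main (y :: List.replicate (n + 2) a) a (by simp) (by
        rintro ⟨b, hb⟩
        simp only [List.replicate_succ, List.cons.injEq] at hb
        exact hya (hb.1.trans hb.2.1.symm))
      refine ⟨p, hp, LEqv.trans' (by simpa using e) ?_⟩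
      simpa [← List.replicate_succ'] using e2
    · simpa using main front x hlen h

/-- The ordered product attached to a coded list. -/
def lprod (l : List (Fin 3)) : Equiv.Perm (Fin 3) := (l.map tau).reverse.prod

lemma LEqv.lprod_eq {l l' : List (Fin 3)} (h : LEqv l l') : lprod l = lprod l' := by
  induction h with
  | rel x y h =>
    obtain ⟨p, q, a, b, rfl, rfl⟩ := h
    simp [lprod, tau_conj, mul_assoc]
  | refl x => rfl
  | symm x y _ ih => exact ih.symm
  | trans x y z _ _ ih1 ih2 => exact ih1.trans ih2

/-- The 12-tuple attached to a coded list. -/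
def toT (l : List (Fin 3)) : Fin 12 → Equiv.Perm (Fin 3) := fun i => tau (l.getD i 0)

lemma LEqv.toT {l l' : List (Fin 3)} (h : LEqv l l') : l.length = l'.length ∧
    (l.length = 12 → Relation.EqvGen HurwitzStep (toT l) (toT l')) := by
  induction h with
  | rel x y h =>
    obtain ⟨p, q, a, b, rfl, rfl⟩ := h
    refine ⟨by simp, fun hl => Relation.EqvGen.rel _ _ (Or.inl ?_)⟩
    simp only [List.length_append, List.length_cons] at hl
    refine ⟨⟨p.length, by omega⟩, ?_, ?_, ?_⟩
    · simp [_root_.toT]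
    · simp [_root_.toT, tau_conj]
    · intro j h1 h2
      have h1' : (j : ℕ) ≠ p.length := fun h => h1 (Fin.ext h)
      have h2' : (j : ℕ) ≠ p.length + 1 := fun h => h2 (Fin.ext h)
      simp only [_root_.toT]
      congr 1
      rcases Nat.lt_or_ge (j : ℕ) p.length with h | h
      · simp [List.getElem?_append_left h]
      · obtain ⟨k, hk⟩ : ∃ k, (j : ℕ) = p.length + (k + 2) := ⟨j - p.length - 2, by omega⟩
        simp [hk, List.getElem?_append_right]
  | refl x => exact ⟨rfl, fun _ => Relation.EqvGen.refl _⟩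
  | symm x y _ ih => exact ⟨ih.1.symm, fun h => Relation.EqvGen.symm _ _ (ih.2 (ih.1.trans h))⟩
  | trans x y z _ _ ih1 ih2 =>
    exact ⟨ih1.1.trans ih2.1, fun h =>
      Relation.EqvGen.trans _ _ _ (ih1.2 h) (ih2.2 (ih1.1.symm.trans h))⟩

/-- The normal form. -/
def nf : List (Fin 3) := [1, 1] ++ List.replicate 10 0

lemma list_nf (l : List (Fin 3)) (hl : l.length = 12) (hc : ¬ ∃ a, l = List.replicate 12 a)
    (hp : lprod l = 1) : Relation.EqvGen HurwitzStep (toT l) (toT nf) := by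
  obtain ⟨p, hp', e⟩ := normal 9 l hl hc
  have h1 : lprod (p ++ List.replicate 10 0) = 1 := e.lprod_eq.symm.trans hp
  have key : ∀ p ∈ heads, lprod (p ++ List.replicate 10 0) = 1 → p = [1, 1] := by decide +kernel
  rw [key p hp' h1] at e
  exact e.toT.2 hl

lemma W_nf (t : Fin 12 → Equiv.Perm (Fin 3)) (ht : t ∈ Wset) :
    Relation.EqvGen HurwitzStep t (toT nf) := by
  obtain ⟨hs, hp, hg⟩ := ht
  choose c hcc using fun i => exists_tau (t i) (hs i)
  have hT : toT (List.ofFn c) = t := by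
    funext i
    rw [← hcc i]
    fin_cases i <;> simp [toT]
  rw [← hT]
  refine list_nf _ (by simp) ?_ ?_
  · rintro ⟨a, ha⟩
    have hca : ∀ i, t i = tau a := by
      intro i
      rw [← hT, ha]
      fin_cases i <;> rfl
    have hle : Subgroup.closure (Set.range t) ≤ Subgroup.centralizer {tau a} := by
      rw [Subgroup.closure_le]
      rintro _ ⟨i, rfl⟩
      rw [hca i]
      simp [Subgroup.mem_centralizer_iff]
    rw [hg] at hle
    have hcomm : ∀ g : Equiv.Perm (Fin 3), tau a * g = g * tau a := fun g =>
      Subgroup.mem_centralizer_iff.1 (hle (Subgroup.mem_top g)) _ rfl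
    have : ∀ a : Fin 3, tau a * tau (a + 1) ≠ tau (a + 1) * tau a := by decide
    exact this a (hcomm _)
  · have : (List.ofFn c).map tau = List.ofFn t := by
      rw [List.map_ofFn]
      congr 1
      funext i
      exact hcc i
    rw [lprod, this, hp]

lemma alt_nf : Relation.EqvGen HurwitzStep altTuple (toT nf) := by
  have h : toT [0, 1, 0, 1, 0, 1, 0, 1, 0, 1, 0, 1] = altTuple := by
    funext i
    fin_cases i <;> rfl
  rw [← h]
  refine list_nf _ rfl ?_ (by decide +kernel)
  decide +kernel

/-- any two elements of W are connected by a finite sequence of Hurwitz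
moves (or their inverses) and simultaneous conjugations; equivalently, every element of
W is equivalent under such moves to the alternating tuple ((12),(23),…,(12),(23)). -/
theorem stmt17 :
    (∀ t ∈ Wset, ∀ t' ∈ Wset, Relation.EqvGen HurwitzStep t t') ∧
    (∀ t ∈ Wset, Relation.EqvGen HurwitzStep t altTuple) := by
  exact ⟨fun t ht t' ht' => .trans _ _ _ (W_nf t ht) (.symm _ _ (W_nf t' ht')),
    fun t ht => .trans _ _ _ (W_nf t ht) (.symm _ _ alt_nf)⟩
end
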